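/- The fifteen-node wedge shape functions reproduce affine fields: for every affine map L : ℝ³ → ℝ and every x ∈ ℝ³, Σ_{i=1}^{15} φ^i(x) · L(n_i) = L(x). -/

import Mathlib

open MeasureTheory MvPolynomial

/-- The fifteen shape functions of the 15-node wedge element, in natural
coordinates `x = (ξ, η, ζ)` with `ξ = x 0`, `η = x 1`, `ζ = x 2`. -/
noncomputable def wedgeShape : Fin 15 → (Fin 3 → ℝ) → ℝ :=
  ![fun x => -((1 - x 0 - x 1) * (1 - x 2) * (2 * x 0 + 2 * x 1 + x 2)) / 2,
    fun x => x 0 * (1 - x 2) * (2 * x 0 - x 2 - 2) / 2,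
    fun x => x 1 * (1 - x 2) * (2 * x 1 - x 2 - 2) / 2,
    fun x => -((1 - x 0 - x 1) * (1 + x 2) * (2 * x 0 + 2 * x 1 - x 2)) / 2,
    fun x => x 0 * (1 + x 2) * (2 * x 0 + x 2 - 2) / 2,
    fun x => x 1 * (1 + x 2) * (2 * x 1 + x 2 - 2) / 2,
    fun x => 2 * x 0 * (1 - x 0 - x 1) * (1 - x 2),
    fun x => 2 * x 0 * x 1 * (1 - x 2),
    fun x => 2 * x 1 * (1 - x 0 - x 1) * (1 - x 2),
    fun x => 2 * x 0 * (1 - x 0 - x 1) * (1 + x 2),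
    fun x => 2 * x 0 * x 1 * (1 + x 2),
    fun x => 2 * x 1 * (1 - x 0 - x 1) * (1 + x 2),
    fun x => (1 - x 0 - x 1) * (1 - x 2 ^ 2),
    fun x => x 0 * (1 - x 2 ^ 2),
    fun x => x 1 * (1 - x 2 ^ 2)]

/-- Natural coordinates of the fifteen nodes of the wedge element. -/
noncomputable def wedgeNode : Fin 15 → Fin 3 → ℝ :=
  ![![0, 0, -1], ![1, 0, -1], ![0, 1, -1],
    ![0, 0, 1], ![1, 0, 1], ![0, 1, 1],
    ![1/2, 0, -1], ![1/2, 1/2, -1], ![0, 1/2, -1],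
    ![1/2, 0, 1], ![1/2, 1/2, 1], ![0, 1/2, 1],
    ![0, 0, 0], ![1, 0, 0], ![0, 1, 0]]

/-- Reference domain of the fifteen-node wedge element. -/
def wedgeDomain : Set (Fin 3 → ℝ) :=
  {x | 0 ≤ x 0 ∧ 0 ≤ x 1 ∧ x 0 + x 1 ≤ 1 ∧ -1 ≤ x 2 ∧ x 2 ≤ 1}

/-- Linear-metric (LM) interpolation functions. -/
noncomputable def phiLM : Fin 4 → (Fin 3 → ℝ) → ℝ :=
  ![fun x => 83/12 - 10 * x 0 - 10 * x 1 - 10 * x 2,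
    fun x => -37/12 + 10 * x 0,
    fun x => -37/12 + 10 * x 1,
    fun x => 1/4 + 10 * x 2]

/-- The four LM evaluation points. -/
noncomputable def ptLM : Fin 4 → Fin 3 → ℝ :=
  ![![37/120, 37/120, -1/40], ![49/120, 37/120, -1/40],
    ![37/120, 49/120, -1/40], ![37/120, 37/120, 3/40]]

/-- Quadratic-metric (QM) interpolation functions. -/
noncomputable def phiQM : Fin 10 → (Fin 3 → ℝ) → ℝ :=
  ![fun x => 6391/72 - (800/3) * x 0 - (800/3) * x 1 - (800/3) * x 2
      + 400 * x 0 * x 1 + 400 * x 0 * x 2 + 400 * x 1 * x 2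
      + 200 * x 0 ^ 2 + 200 * x 1 ^ 2 + 200 * x 2 ^ 2,
    fun x => 1591/72 - (400/3) * x 0 + 200 * x 0 ^ 2,
    fun x => 1591/72 - (400/3) * x 1 + 200 * x 1 ^ 2,
    fun x => -1/8 + 200 * x 2 ^ 2,
    fun x => -3071/36 + 400 * x 0 + (370/3) * x 1 + (370/3) * x 2
      - 400 * x 0 * x 1 - 400 * x 0 * x 2 - 400 * x 0 ^ 2,
    fun x => 1369/36 - (370/3) * x 0 - (370/3) * x 1 + 400 * x 0 * x 1,
    fun x => -3071/36 + (370/3) * x 0 + 400 * x 1 + (370/3) * x 2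
      - 400 * x 0 * x 1 - 400 * x 1 * x 2 - 400 * x 1 ^ 2,
    fun x => 83/12 - 10 * x 0 - 10 * x 1 + (800/3) * x 2
      - 400 * x 0 * x 2 - 400 * x 1 * x 2 - 400 * x 2 ^ 2,
    fun x => -37/12 + 10 * x 0 - (370/3) * x 2 + 400 * x 0 * x 2,
    fun x => -37/12 + 10 * x 1 - (370/3) * x 2 + 400 * x 1 * x 2]

/-- The ten QM evaluation points. -/
noncomputable def ptQM : Fin 10 → Fin 3 → ℝ :=
  ![![37/120, 37/120, -1/40], ![49/120, 37/120, -1/40],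
    ![37/120, 49/120, -1/40], ![37/120, 37/120, 3/40],
    ![43/120, 37/120, -1/40], ![43/120, 43/120, -1/40],
    ![37/120, 43/120, -1/40], ![37/120, 37/120, 1/40],
    ![43/120, 37/120, 1/40], ![37/120, 43/120, 1/40]]

/-- The isoparametric map of the wedge element with nodal positions `X`. -/
noncomputable def wedgeMap (X : Fin 15 → Fin 3 → ℝ) (u : Fin 3 → ℝ) : Fin 3 → ℝ :=
  fun m => ∑ i : Fin 15, wedgeShape i u * X i m

/-- The Jacobian matrix `J_mn = ∂X_m/∂u_n` of the isoparametric map. -/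
noncomputable def wedgeJac (X : Fin 15 → Fin 3 → ℝ) (u : Fin 3 → ℝ) :
    Matrix (Fin 3) (Fin 3) ℝ :=
  Matrix.of fun m n => fderiv ℝ (fun v => wedgeMap X v m) u (Pi.single n 1)

/-- The metric (Jacobian determinant) of the isoparametric map. -/
noncomputable def wedgeMetric (X : Fin 15 → Fin 3 → ℝ) (u : Fin 3 → ℝ) : ℝ :=
  (wedgeJac X u).det

theorem affineMap_sum_smul {k ι V W : Type*} [Ring k] [AddCommGroup V] [Module k V]
    [AddCommGroup W] [Module k W] (f : V →ᵃ[k] W) (s : Finset ι) (w : ι → k) (p : ι → V)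
    (hw : ∑ i ∈ s, w i = 1) : f (∑ i ∈ s, w i • p i) = ∑ i ∈ s, w i • f (p i) := by
  calc
    f (∑ i ∈ s, w i • p i) = f (s.affineCombination k p w) := by
      rw [s.affineCombination_eq_linear_combination p w hw]
    _ = s.affineCombination k (f ∘ p) w := s.map_affineCombination p w hw f
    _ = ∑ i ∈ s, w i • f (p i) := s.affineCombination_eq_linear_combination (f ∘ p) w hw

theorem sum_wedgeShape (x : Fin 3 → ℝ) : ∑ i, wedgeShape i x = 1 := by
  simp only [Fin.sum_univ_succ, Fin.sum_univ_zero, wedgeShape, Matrix.cons_val_zero,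
    Matrix.cons_val_succ]
  ring

theorem sum_wedgeShape_smul_wedgeNode (x : Fin 3 → ℝ) :
    ∑ i, wedgeShape i x • wedgeNode i = x := by
  simp only [Fin.sum_univ_succ, Fin.sum_univ_zero, wedgeShape, wedgeNode, Matrix.cons_val_zero,
    Matrix.cons_val_succ]
  ext m
  match m with
  | 0 | 1 | 2 =>
    simp only [Pi.add_apply, Pi.smul_apply, Pi.zero_apply, smul_eq_mul, Matrix.cons_val]
    ring

theorem wedgeShape_affine_reproduction_general {E : Type*} [AddCommGroup E] [Module ℝ E]
    (L : (Fin 3 → ℝ) →ᵃ[ℝ] E) (x : Fin 3 → ℝ) :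
    ∑ i, wedgeShape i x • L (wedgeNode i) = L x := by
  rw [← affineMap_sum_smul L _ _ _ (sum_wedgeShape x), sum_wedgeShape_smul_wedgeNode]

/-- the wedge shape functions reproduce affine fields. -/
theorem wedgeShape_affine_reproduction (L : (Fin 3 → ℝ) →ᵃ[ℝ] ℝ) (x : Fin 3 → ℝ) :
    ∑ i : Fin 15, wedgeShape i x * L (wedgeNode i) = L x := by
  simpa only [smul_eq_mul] using wedgeShape_affine_reproduction_general L x
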